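/- Entropic uncertainty relation for H^↓: Let ρ_ABC be a density matrix on ℂ^(A×B×C), let {M_x}_{x∈X} and {N_y}_{y∈Y} be POVMs on the A-system (finite families of positive semidefinite matrices summing to the identity), and let c := max_{x,y} ‖ M_x^{1/2} N_y^{1/2} ‖ where ‖·‖ is the operator norm. Define the classical-quantum post-measurement states ρ_XB on ℂ^(X×B) by ρ_XB (x,b)(x',b') = (if x = x' then (tr_{AC}((M_x ⊗ 1_{BC}) ρ_ABC)) b b' else 0), and ρ_YC on ℂ^(Y×C) analogously with N_y and tr_{AB}. Then for all α, β ∈ (0,2) with α + β = 2 and α ≠ 1: H_α^↓(X|B)_ρ + H_β^↓(Y|C)_ρ ≥ log(1/c), where H_γ^↓(X|B)_ρ := −D_γ(ρ_XB ‖ 1_X ⊗ ρ_B) with ρ_B = tr_X ρ_XB. -/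

import Mathlib

open scoped Kronecker ComplexOrder
open Matrix

/-- Real power of a matrix via the functional calculus on the eigenvalues,
with the convention `0 ^ t = 0` (powers taken on the support). -/
noncomputable def matRpow {n : Type*} [Fintype n] [DecidableEq n]
    (A : Matrix n n ℂ) (t : ℝ) : Matrix n n ℂ :=
  if hA : A.IsHermitian then
    (hA.eigenvectorUnitary : Matrix n n ℂ) *
      Matrix.diagonal (fun i =>
        ((if hA.eigenvalues i = 0 then (0 : ℝ) else (hA.eigenvalues i) ^ t : ℝ) : ℂ)) *
      star (hA.eigenvectorUnitary : Matrix n n ℂ)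
  else 0

/-- Matrix logarithm on the support. -/
noncomputable def matLog {n : Type*} [Fintype n] [DecidableEq n]
    (A : Matrix n n ℂ) : Matrix n n ℂ :=
  if hA : A.IsHermitian then
    (hA.eigenvectorUnitary : Matrix n n ℂ) *
      Matrix.diagonal (fun i => ((Real.log (hA.eigenvalues i) : ℝ) : ℂ)) *
      star (hA.eigenvectorUnitary : Matrix n n ℂ)
  else 0

/-- Partial trace over the first tensor factor. -/
noncomputable def trFst {a b : Type*} [Fintype a] (M : Matrix (a × b) (a × b) ℂ) :
    Matrix b b ℂ :=
  Matrix.of fun j j' => ∑ i, M (i, j) (i, j')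

/-- Partial trace over the second tensor factor. -/
noncomputable def trSnd {a b : Type*} [Fintype b] (M : Matrix (a × b) (a × b) ℂ) :
    Matrix a a ℂ :=
  Matrix.of fun i i' => ∑ j, M (i, j) (i', j)

/-- Partial trace over the third factor of a tripartite system. -/
noncomputable def trThird {a b c : Type*} [Fintype c]
    (M : Matrix (a × b × c) (a × b × c) ℂ) : Matrix (a × b) (a × b) ℂ :=
  Matrix.of fun p p' => ∑ k, M (p.1, p.2, k) (p'.1, p'.2, k)

/-- Partial trace over the second factor of a tripartite system. -/
noncomputable def trSecond {a b c : Type*} [Fintype b]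
    (M : Matrix (a × b × c) (a × b × c) ℂ) : Matrix (a × c) (a × c) ℂ :=
  Matrix.of fun p p' => ∑ j, M (p.1, j, p.2) (p'.1, j, p'.2)

/-- Partial trace over the first two factors of a tripartite system. -/
noncomputable def trFstSnd {a b c : Type*} [Fintype a] [Fintype b]
    (M : Matrix (a × b × c) (a × b × c) ℂ) : Matrix c c ℂ :=
  Matrix.of fun k k' => ∑ i, ∑ j, M (i, j, k) (i, j, k')

/-- Partial trace over the first and third factors of a tripartite system. -/
noncomputable def trFstThird {a b c : Type*} [Fintype a] [Fintype c]
    (M : Matrix (a × b × c) (a × b × c) ℂ) : Matrix b b ℂ :=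
  Matrix.of fun j j' => ∑ i, ∑ k, M (i, j, k) (i, j', k)

/-- Quantum Rényi relative entropy `D_α(ρ‖σ)`. -/
noncomputable def renyiDiv {n : Type*} [Fintype n] [DecidableEq n]
    (α : ℝ) (ρ σ : Matrix n n ℂ) : ℝ :=
  (α - 1)⁻¹ * Real.log ((matRpow ρ α * matRpow σ (1 - α)).trace.re)

/-- Sandwiched quantum Rényi divergence `D̃_α(ρ‖σ)`. -/
noncomputable def sandwichedRenyiDiv {n : Type*} [Fintype n] [DecidableEq n]
    (α : ℝ) (ρ σ : Matrix n n ℂ) : ℝ :=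
  (α - 1)⁻¹ * Real.log
    ((matRpow (matRpow σ ((1 - α) / (2 * α)) * ρ * matRpow σ ((1 - α) / (2 * α))) α).trace.re)

/-- Quantum relative entropy `D(ρ‖σ)`. -/
noncomputable def relEntropy {n : Type*} [Fintype n] [DecidableEq n]
    (ρ σ : Matrix n n ℂ) : ℝ :=
  (ρ * (matLog ρ - matLog σ)).trace.re


noncomputable def fpow (p t : ℝ) : ℝ := if p = 0 then 0 else p ^ t

def Spec {n : Type*} [Fintype n] [DecidableEq n] (A U : Matrix n n ℂ) (d : n → ℝ) : Prop :=
  Uᴴ * U = 1 ∧ U * Uᴴ = 1 ∧ A = U * diagonal (fun i => (d i : ℂ)) * Uᴴ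

lemma spec_herm {n : Type*} [Fintype n] [DecidableEq n] {A : Matrix n n ℂ} (hA : A.IsHermitian) :
    Spec A (hA.eigenvectorUnitary : Matrix n n ℂ) hA.eigenvalues := by
  refine ⟨?_, ?_, ?_⟩
  · exact (Matrix.mem_unitaryGroup_iff').1 hA.eigenvectorUnitary.2
  · exact (Matrix.mem_unitaryGroup_iff).1 hA.eigenvectorUnitary.2
  · conv_lhs => rw [hA.spectral_theorem, Unitary.conjStarAlgAut_apply]
    rfl

lemma spec_exists {n : Type*} [Fintype n] [DecidableEq n] {A : Matrix n n ℂ} (hA : A.PosSemidef) :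
    ∃ U d, Spec A U d ∧ ∀ i, 0 ≤ d i :=
  ⟨_, _, spec_herm hA.1, fun i => hA.eigenvalues_nonneg i⟩

lemma Spec.isHermitian {n : Type*} [Fintype n] [DecidableEq n] {A U : Matrix n n ℂ} {d : n → ℝ}
    (h : Spec A U d) : A.IsHermitian := by
  rw [h.2.2]
  unfold Matrix.IsHermitian
  simp only [conjTranspose_mul, conjTranspose_conjTranspose, diagonal_conjTranspose, Matrix.mul_assoc]
  congr 3
  ext i
  simp

lemma spec_unique {n : Type*} [Fintype n] [DecidableEq n] {A U V : Matrix n n ℂ} {d e : n → ℝ}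
    (h : Spec A U d) (h' : Spec A V e) (f : ℝ → ℝ) :
    U * diagonal (fun i => (f (d i) : ℂ)) * Uᴴ = V * diagonal (fun i => (f (e i) : ℂ)) * Vᴴ := by
  have h1 : Vᴴ * U * diagonal (fun i => (d i : ℂ)) = diagonal (fun i => (e i : ℂ)) * (Vᴴ * U) := by
    have : Vᴴ * A * U = Vᴴ * A * U := rfl
    conv_lhs at this => rw [h.2.2]
    conv_rhs at this => rw [h'.2.2]
    calc _ = Vᴴ * (U * diagonal (fun i => (d i : ℂ)) * Uᴴ) * U := by
            simp only [Matrix.mul_assoc, h.1, Matrix.mul_one]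
      _ = _ := this
      _ = (Vᴴ * V) * diagonal (fun i => (e i : ℂ)) * (Vᴴ * U) := by
            simp only [Matrix.mul_assoc]
      _ = _ := by rw [h'.1, Matrix.one_mul]
  have h2 : Vᴴ * U * diagonal (fun i => (f (d i) : ℂ)) =
      diagonal (fun i => (f (e i) : ℂ)) * (Vᴴ * U) := by
    ext i j
    have := congrFun (congrFun h1 i) j
    rw [mul_diagonal, diagonal_mul] at this ⊢
    by_cases h0 : (Vᴴ * U) i j = 0
    · simp [h0]
    · have : (d j : ℂ) = e i := by
        rw [mul_comm] at this
        exact mul_right_cancel₀ h0 this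
      have : d j = e i := by exact_mod_cast this
      rw [this, mul_comm]
  calc _ = (V * Vᴴ) * U * diagonal (fun i => (f (d i) : ℂ)) * Uᴴ := by
        rw [h'.2.1, Matrix.one_mul]
    _ = V * (Vᴴ * U * diagonal (fun i => (f (d i) : ℂ))) * Uᴴ := by simp only [Matrix.mul_assoc]
    _ = _ := by rw [h2]; simp only [Matrix.mul_assoc, h.2.1, Matrix.mul_one]

lemma matRpow_of_spec {n : Type*} [Fintype n] [DecidableEq n] {A U : Matrix n n ℂ} {d : n → ℝ}
    (h : Spec A U d) (t : ℝ) :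
    matRpow A t = U * diagonal (fun i => (fpow (d i) t : ℂ)) * Uᴴ := by
  have hA := h.isHermitian
  rw [spec_unique h (spec_herm hA) (fun x => fpow x t), matRpow, dif_pos hA]
  rfl

lemma trace_diag_mul {m n : Type*} [Fintype n] [DecidableEq n] [Fintype m] [DecidableEq m]
    (u : Matrix m n ℂ) (p : m → ℝ) (q : n → ℝ) :
    (diagonal (fun i => (p i : ℂ)) * u * diagonal (fun i => (q i : ℂ)) * uᴴ).trace.re =
      ∑ i, ∑ j, Complex.normSq (u i j) * (p i * q j) := by
  rw [trace, Complex.re_sum]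
  refine Finset.sum_congr rfl fun i _ => ?_
  rw [diag_apply, mul_apply, Complex.re_sum]
  refine Finset.sum_congr rfl fun j _ => ?_
  rw [mul_diagonal, diagonal_mul, conjTranspose_apply]
  have : (p i : ℂ) * u i j * (q j) * star (u i j) =
    ((Complex.normSq (u i j) * (p i * q j) : ℝ) : ℂ) := by
    push_cast
    rw [← Complex.mul_conj]
    simp only [RCLike.star_def]
    ring
  rw [this, Complex.ofReal_re]

lemma trace_rpow {n : Type*} [Fintype n] [DecidableEq n] {A B U V : Matrix n n ℂ} {p q : n → ℝ}
    (hA : Spec A U p) (hB : Spec B V q) (s t : ℝ) :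
    (matRpow A s * matRpow B t).trace.re =
      ∑ i, ∑ j, Complex.normSq ((Uᴴ * V) i j) * (fpow (p i) s * fpow (q j) t) := by
  rw [matRpow_of_spec hA, matRpow_of_spec hB, ← trace_diag_mul, conjTranspose_mul,
    conjTranspose_conjTranspose]
  congr 1
  rw [Matrix.mul_assoc U, Matrix.mul_assoc U, trace_mul_comm U]
  simp only [Matrix.mul_assoc]

/-- block diagonal matrix, block index first -/
def blk {X B : Type*} [DecidableEq X] (F : X → Matrix B B ℂ) : Matrix (X × B) (X × B) ℂ :=
  Matrix.of fun p p' => if p.1 = p'.1 then F p.1 p.2 p'.2 else 0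

lemma blk_mul {X B : Type*} [DecidableEq X] [Fintype X] [Fintype B] (F G : X → Matrix B B ℂ) :
    blk F * blk G = blk (fun x => F x * G x) := by
  ext ⟨x, b⟩ ⟨x', b'⟩
  simp only [blk, mul_apply, of_apply, Fintype.sum_prod_type]
  rw [Finset.sum_eq_single x]
  · by_cases h : x = x' <;> simp [h]
  · intro z _ hz
    simp [hz.symm]
  · simp

lemma blk_conjTranspose {X B : Type*} [DecidableEq X] (F : X → Matrix B B ℂ) :
    (blk F)ᴴ = blk (fun x => (F x)ᴴ) := by
  ext ⟨x, b⟩ ⟨x', b'⟩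
  simp only [blk, conjTranspose_apply, of_apply]
  by_cases h : x = x'
  · subst h; simp
  · simp [h, Ne.symm h]

lemma blk_one {X B : Type*} [DecidableEq X] [DecidableEq B] :
    blk (fun _ : X => (1 : Matrix B B ℂ)) = 1 := by
  ext ⟨x, b⟩ ⟨x', b'⟩
  simp only [blk, of_apply, one_apply, Prod.mk.injEq]
  split_ifs <;> simp_all

lemma blk_diagonal {X B : Type*} [DecidableEq X] [DecidableEq B] (d : X → B → ℂ) :
    blk (fun x => diagonal (d x)) = diagonal (fun z : X × B => d z.1 z.2) := by
  ext ⟨x, b⟩ ⟨x', b'⟩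
  simp only [blk, of_apply, diagonal_apply, Prod.mk.injEq]
  split_ifs <;> simp_all

lemma blk_trace {X B : Type*} [DecidableEq X] [Fintype X] [Fintype B] (F : X → Matrix B B ℂ) :
    (blk F).trace = ∑ x, (F x).trace := by
  simp [trace, blk, Fintype.sum_prod_type]

lemma blk_spec {X B : Type*} [DecidableEq X] [Fintype X] [Fintype B] [DecidableEq B]
    {F U : X → Matrix B B ℂ} {d : X → B → ℝ} (h : ∀ x, Spec (F x) (U x) (d x)) :
    Spec (blk F) (blk U) (fun z => d z.1 z.2) := by
  refine ⟨?_, ?_, ?_⟩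
  · rw [blk_conjTranspose, blk_mul, ← blk_one]; congr; ext x; rw [(h x).1]
  · rw [blk_conjTranspose, blk_mul, ← blk_one]; congr; ext x; rw [(h x).2.1]
  · rw [← blk_diagonal (fun x b => (d x b : ℂ)), blk_conjTranspose, blk_mul, blk_mul]
    congr; ext x; rw [← (h x).2.2]

lemma matRpow_blk {X B : Type*} [DecidableEq X] [Fintype X] [Fintype B] [DecidableEq B]
    (F : X → Matrix B B ℂ) (h : ∀ x, (F x).PosSemidef) (t : ℝ) :
    matRpow (blk F) t = blk (fun x => matRpow (F x) t) := by
  choose U d hd _ using fun x => spec_exists (h x)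
  rw [matRpow_of_spec (blk_spec hd), ← blk_diagonal (fun x b => (fpow (d x b) t : ℂ)),
    blk_conjTranspose, blk_mul, blk_mul]
  congr; ext x; rw [← matRpow_of_spec (hd x)]

lemma one_kron_eq_blk {X B : Type*} [DecidableEq X] (G : Matrix B B ℂ) :
    (1 : Matrix X X ℂ) ⊗ₖ G = blk (fun _ => G) := by
  ext ⟨x, b⟩ ⟨x', b'⟩
  simp [blk, kroneckerMap_apply, one_apply]

lemma matRpow_half_mul {n : Type*} [Fintype n] [DecidableEq n] {A : Matrix n n ℂ}
    (hA : A.PosSemidef) : matRpow A (1/2) * matRpow A (1/2) = A ∧ (matRpow A (1/2))ᴴ = matRpow A (1/2) := by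
  obtain ⟨U, d, h, hd⟩ := spec_exists hA
  rw [matRpow_of_spec h]
  constructor
  · conv_rhs => rw [h.2.2]
    calc _ = U * diagonal (fun i => (fpow (d i) (1/2) : ℂ)) * (Uᴴ * U) * diagonal (fun i => (fpow (d i) (1/2) : ℂ)) * Uᴴ := by
          simp only [Matrix.mul_assoc]
      _ = _ := by
        rw [h.1, Matrix.mul_one, Matrix.mul_assoc U, diagonal_mul_diagonal]
        congr 3
        ext i
        rw [← Complex.ofReal_mul]
        congr 1
        unfold fpow
        split_ifs with h0
        · simp [h0]
        · rw [← Real.sqrt_eq_rpow, Real.mul_self_sqrt (hd i)]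
  · simp only [conjTranspose_mul, conjTranspose_conjTranspose, diagonal_conjTranspose, Matrix.mul_assoc]
    congr 3
    ext i
    simp


noncomputable def fr {m n : Type*} [Fintype m] [Fintype n] (X : Matrix m n ℂ) : ℝ := (Xᴴ * X).trace.re

lemma fr_nonneg {m n : Type*} [Fintype m] [Fintype n] (X : Matrix m n ℂ) : 0 ≤ fr X :=
  (Complex.le_def.1 (posSemidef_conjTranspose_mul_self X).trace_nonneg).1

lemma trace_sandwich_diag {m n : Type*} [Fintype n] [DecidableEq n] [Fintype m] [DecidableEq m]
    (a : Matrix m n ℂ) (p : m → ℝ) :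
    (aᴴ * diagonal (fun i => (p i : ℂ)) * a).trace.re =
      ∑ i, ∑ j, Complex.normSq (a i j) * p i := by
  have := trace_diag_mul a p (fun _ => 1)
  simp only [mul_one, Complex.ofReal_one, diagonal_one, Matrix.mul_one] at this
  rw [← this, Matrix.mul_assoc, trace_mul_comm]

lemma bessel {E C J : Type*} [Fintype E] [Fintype C] [DecidableEq C] [Fintype J] [DecidableEq J]
    (O : Matrix E C ℂ) (p : C → ℝ) (hO : Oᴴ * O = diagonal (fun i => (p i : ℂ)))
    (Z : Matrix E J ℂ) :
    ∑ i, ∑ j, Complex.normSq ((Oᴴ * Z) i j) * (p i)⁻¹ ≤ fr Z := by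
  set a := Oᴴ * Z with ha
  set D : Matrix C C ℂ := diagonal (fun i => (((p i)⁻¹ : ℝ) : ℂ)) with hD
  have hDD : D * diagonal (fun i => (p i : ℂ)) * D = D := by
    rw [hD, diagonal_mul_diagonal, diagonal_mul_diagonal]
    congr 1
    ext i
    by_cases h : p i = 0
    · simp [h]
    · have : (p i : ℂ) ≠ 0 := by exact_mod_cast h
      push_cast
      field_simp
  have hDh : Dᴴ = D := by
    rw [hD, diagonal_conjTranspose]; congr 1; ext i; simp
  have h0 := fr_nonneg (Z - O * (D * a))
  have hz : Zᴴ * O = aᴴ := by rw [ha]; simp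
  have : (Z - O * (D * a))ᴴ * (Z - O * (D * a)) = Zᴴ * Z - aᴴ * D * a := by
    have e1 : aᴴ * D * Oᴴ * (O * (D * a)) = aᴴ * D * a := by
      calc _ = aᴴ * (D * (Oᴴ * O) * D) * a := by simp only [Matrix.mul_assoc]
        _ = _ := by rw [hO, hDD]
    rw [conjTranspose_sub, conjTranspose_mul, conjTranspose_mul, hDh, Matrix.sub_mul,
      Matrix.mul_sub, Matrix.mul_sub, e1, ← Matrix.mul_assoc Zᴴ O, hz, Matrix.mul_assoc (aᴴ * D) Oᴴ Z,
      ← ha, ← Matrix.mul_assoc]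
    abel
  rw [fr, this, trace_sub, Complex.sub_re, hD, trace_sandwich_diag] at h0
  rw [fr]; linarith

lemma fr_mul_unitary {E C : Type*} [Fintype E] [Fintype C] [DecidableEq C]
    (X : Matrix E C ℂ) (U : Matrix C C ℂ) (hU : U * Uᴴ = 1) : fr (X * U) = fr X := by
  unfold fr
  rw [conjTranspose_mul, Matrix.mul_assoc, trace_mul_comm, Matrix.mul_assoc, Matrix.mul_assoc, hU,
    Matrix.mul_one]

lemma scalar_cs (a b u : ℂ) (p q t : ℝ) (hp : 0 ≤ p) (hq : 0 ≤ q) (ht : 0 < t)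
    (h : a + b = u * q) :
    Complex.normSq u * (if p = 0 then 0 else t * q ^ 2 / (q + t * p)) ≤
      t * (Complex.normSq b * q⁻¹) + Complex.normSq a * p⁻¹ := by
  have na := Complex.normSq_nonneg a
  have nb := Complex.normSq_nonneg b
  split_ifs with h0
  · simp; positivity
  rcases hq.eq_or_lt with hq0 | hq0
  · rw [← hq0]; simp; positivity
  have hp0 : 0 < p := lt_of_le_of_ne hp (Ne.symm h0)
  have hu : Complex.normSq u * q ^ 2 = Complex.normSq (a + b) := by
    rw [h, Complex.normSq_mul, Complex.normSq_ofReal]; ring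
  have : Complex.normSq u * (t * q ^ 2 / (q + t * p)) =
    t * Complex.normSq (a + b) / (q + t * p) := by rw [← hu]; ring
  rw [this, div_le_iff₀ (by positivity)]
  have e : (t * (Complex.normSq b * q⁻¹) + Complex.normSq a * p⁻¹) * (q + t * p) =
    t * Complex.normSq b + t * Complex.normSq a + (t ^ 2 * p ^ 2 * Complex.normSq b + q ^ 2 * Complex.normSq a) / (p * q) := by
    field_simp; ring
  rw [e]
  have : t * (Complex.normSq (a + b) - Complex.normSq b - Complex.normSq a) ≤ (t ^ 2 * p ^ 2 * Complex.normSq b + q ^ 2 * Complex.normSq a) / (p * q) := by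
    rw [le_div_iff₀ (by positivity)]
    simp only [Complex.normSq_apply, Complex.add_re, Complex.add_im]
    nlinarith [sq_nonneg (t * p * b.re - q * a.re), sq_nonneg (t * p * b.im - q * a.im)]
  linarith

lemma lemmaL {E C : Type*} [Fintype E] [DecidableEq E] [Fintype C] [DecidableEq C]
    (Ψ : Matrix E C ℂ) (S W : Matrix E E ℂ) (hS : Sᴴ = S) {U V : Matrix C C ℂ} {p q : C → ℝ}
    (hP : Spec (Ψᴴ * Ψ) U p) (hQ : Spec (Ψᴴ * (S * S) * Ψ) V q)
    (hp : ∀ i, 0 ≤ p i) (hq : ∀ i, 0 ≤ q i) (t : ℝ) (ht : 0 < t) :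
    ∑ i, ∑ j, Complex.normSq ((Uᴴ * V) i j) *
      (if p i = 0 then 0 else t * q j ^ 2 / (q j + t * p i)) ≤
      t * fr (Wᴴ * Ψ) + fr ((S - W) * S * Ψ) := by
  have hO1 : (Ψ * U)ᴴ * (Ψ * U) = diagonal (fun i => (p i : ℂ)) := by
    calc _ = Uᴴ * (Ψᴴ * Ψ) * U := by simp only [conjTranspose_mul, Matrix.mul_assoc]
      _ = (Uᴴ * U) * diagonal (fun i => (p i : ℂ)) * (Uᴴ * U) := by
        rw [hP.2.2]; simp only [Matrix.mul_assoc]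
      _ = _ := by rw [hP.1, Matrix.one_mul, Matrix.mul_one]
  have hO2 : (S * Ψ * V)ᴴ * (S * Ψ * V) = diagonal (fun i => (q i : ℂ)) := by
    calc _ = Vᴴ * (Ψᴴ * (S * S) * Ψ) * V := by simp only [conjTranspose_mul, Matrix.mul_assoc, hS]
      _ = (Vᴴ * V) * diagonal (fun i => (q i : ℂ)) * (Vᴴ * V) := by
        rw [hQ.2.2]; simp only [Matrix.mul_assoc]
      _ = _ := by rw [hQ.1, Matrix.one_mul, Matrix.mul_one]
  have b1 := bessel (Ψ * U) p hO1 ((S - W) * S * Ψ * V)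
  have b2 := bessel (S * Ψ * V) q hO2 (Wᴴ * Ψ * U)
  rw [fr_mul_unitary _ _ hQ.2.1] at b1
  rw [fr_mul_unitary _ _ hP.2.1, Finset.sum_comm] at b2
  have key : (Ψ * U)ᴴ * ((S - W) * S * Ψ * V) + ((S * Ψ * V)ᴴ * (Wᴴ * Ψ * U))ᴴ =
      (Uᴴ * V) * diagonal (fun i => (q i : ℂ)) := by
    calc _ = Uᴴ * (Ψᴴ * (S * S) * Ψ) * V := by
          simp only [conjTranspose_mul, conjTranspose_conjTranspose, Matrix.sub_mul,
            Matrix.mul_sub, Matrix.mul_assoc]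
          abel
      _ = Uᴴ * V * diagonal (fun i => (q i : ℂ)) * (Vᴴ * V) := by
        rw [hQ.2.2]; simp only [Matrix.mul_assoc]
      _ = _ := by rw [hQ.1, Matrix.mul_one]
  calc _ ≤ ∑ i, ∑ j, (t * (Complex.normSq (((S * Ψ * V)ᴴ * (Wᴴ * Ψ * U)) j i) * (q j)⁻¹) +
        Complex.normSq (((Ψ * U)ᴴ * ((S - W) * S * Ψ * V)) i j) * (p i)⁻¹) := by
        refine Finset.sum_le_sum fun i _ => Finset.sum_le_sum fun j _ => ?_
        have k := congrFun (congrFun key i) j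
        rw [Matrix.add_apply, mul_diagonal, conjTranspose_apply] at k
        have := scalar_cs _ _ _ (p i) (q j) t (hp i) (hq j) ht k
        rwa [RCLike.star_def, Complex.normSq_conj] at this
    _ = t * ∑ i, ∑ j, (Complex.normSq (((S * Ψ * V)ᴴ * (Wᴴ * Ψ * U)) j i) * (q j)⁻¹) +
        ∑ i, ∑ j, Complex.normSq (((Ψ * U)ᴴ * ((S - W) * S * Ψ * V)) i j) * (p i)⁻¹ := by
        simp only [Finset.sum_add_distrib, Finset.mul_sum]
    _ ≤ _ := by gcongr

lemma schwarz0 {E J X : Type*} [Fintype E] [DecidableEq E] [Fintype J] [Fintype X]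
    (L : X → Matrix E E ℂ) (hL : ∀ x, (L x)ᴴ = L x) (hsum : ∑ x, L x * L x = 1)
    (K : X → Matrix E J ℂ) : fr (∑ x, L x * K x) ≤ ∑ x, fr (K x) := by
  set T := ∑ x, L x * K x with hT
  have h0 : 0 ≤ ∑ x, fr (K x - L x * T) := Finset.sum_nonneg fun x _ => fr_nonneg _
  have hTh : Tᴴ = ∑ x, (K x)ᴴ * L x := by
    rw [hT, conjTranspose_sum]
    simp only [conjTranspose_mul, hL]
  have : ∑ x, fr (K x - L x * T) = ∑ x, fr (K x) - fr T := by
    have e : ∀ x, (K x - L x * T)ᴴ * (K x - L x * T) =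
        (K x)ᴴ * K x - ((K x)ᴴ * L x) * T - Tᴴ * (L x * K x) + Tᴴ * (L x * L x) * T := by
      intro x
      simp only [conjTranspose_sub, conjTranspose_mul, hL, Matrix.sub_mul, Matrix.mul_sub,
        Matrix.mul_assoc]
      abel
    simp only [fr, e]
    rw [← Complex.re_sum, ← trace_sum, Finset.sum_add_distrib, Finset.sum_sub_distrib,
      Finset.sum_sub_distrib, ← Matrix.sum_mul, ← Matrix.mul_sum, ← Matrix.sum_mul, ← Matrix.mul_sum,
      hsum, ← hTh, ← hT, Matrix.mul_one, sub_add_cancel, trace_sub, Complex.sub_re, trace_sum,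
      Complex.re_sum]
  linarith

noncomputable def qf {m n : Type*} [Fintype m] [Fintype n] (Θ : Matrix m n ℂ) (Q : Matrix m m ℂ) : ℝ :=
  (Θᴴ * Q * Θ).trace.re

lemma qf_nonneg {m n : Type*} [Fintype m] [Fintype n] (Θ : Matrix m n ℂ) {Q : Matrix m m ℂ}
    (hQ : Q.PosSemidef) : 0 ≤ qf Θ Q :=
  (Complex.le_def.1 (hQ.conjTranspose_mul_mul_same Θ).trace_nonneg).1

lemma qf_sum {m n X : Type*} [Fintype m] [Fintype n] [Fintype X] (Θ : Matrix m n ℂ)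
    (Q : X → Matrix m m ℂ) : ∑ x, qf Θ (Q x) = qf Θ (∑ x, Q x) := by
  simp only [qf]
  rw [← Complex.re_sum, ← trace_sum, Matrix.mul_sum, Matrix.sum_mul]

lemma sum_kron {l m n p X : Type*} [Fintype X] (M : X → Matrix l m ℂ) (Q : Matrix n p ℂ) :
    (∑ x, M x) ⊗ₖ Q = ∑ x, M x ⊗ₖ Q := by
  ext ⟨i, j⟩ ⟨i', j'⟩
  simp [kroneckerMap_apply, Matrix.sum_apply, Finset.sum_mul]

lemma schwarz1 {A G J X : Type*} [Fintype A] [DecidableEq A] [Fintype G] [DecidableEq G]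
    [Fintype J] [Fintype X] (M : X → Matrix A A ℂ) (hM : ∀ x, (M x).PosSemidef)
    (hMsum : ∑ x, M x = 1) (K : X → Matrix G G ℂ) (Θ : Matrix (A × G) J ℂ) :
    fr ((∑ x, M x ⊗ₖ K x) * Θ) ≤ ∑ x, qf Θ (M x ⊗ₖ ((K x)ᴴ * K x)) := by
  have h := schwarz0 (fun x => matRpow (M x) (1/2) ⊗ₖ (1 : Matrix G G ℂ))
    (fun x => by rw [conjTranspose_kronecker, (matRpow_half_mul (hM x)).2, conjTranspose_one])
    (by
      simp only [← mul_kronecker_mul, (matRpow_half_mul (hM _)).1, Matrix.one_mul]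
      rw [← sum_kron, hMsum, one_kronecker_one])
    (fun x => (matRpow (M x) (1/2) ⊗ₖ K x) * Θ)
  simp only [← Matrix.mul_assoc, ← mul_kronecker_mul, (matRpow_half_mul (hM _)).1, Matrix.one_mul] at h
  rw [Matrix.sum_mul]
  refine h.trans (le_of_eq (Finset.sum_congr rfl fun x _ => ?_))
  rw [fr, qf, conjTranspose_mul, conjTranspose_kronecker, (matRpow_half_mul (hM x)).2,
    Matrix.mul_assoc, ← Matrix.mul_assoc (_ ⊗ₖ _), ← mul_kronecker_mul, (matRpow_half_mul (hM x)).1,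
    Matrix.mul_assoc]

lemma middle {A G C X Y : Type*} [Fintype A] [DecidableEq A] [Fintype G] [DecidableEq G]
    [Fintype C] [DecidableEq C] [Fintype X] [Fintype Y]
    (M : X → Matrix A A ℂ) (N : Y → Matrix A A ℂ)
    (hM : ∀ x, (M x).PosSemidef) (hMsum : ∑ x, M x = 1)
    (hN : ∀ y, (N y).PosSemidef) (hNsum : ∑ y, N y = 1) (k : ℝ)
    (hk : ∀ x y, ((k : ℂ) • N y - N y * M x * N y).PosSemidef)
    (K : X → Matrix G G ℂ) (Ψ : Matrix (A × G) C ℂ) (t : ℝ) (S : Y → Matrix (A × G) (A × G) ℂ)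
    (hS : S = fun y => matRpow (N y) (1/2) ⊗ₖ (1 : Matrix G G ℂ)) (T : Matrix (A × G) (A × G) ℂ)
    (hT : T = ∑ x, M x ⊗ₖ K x) (ht : 0 < t) :
    ∑ y, (t * fr ((T * S y)ᴴ * Ψ) + fr ((S y - T * S y) * S y * Ψ)) ≤
      ∑ x, (t * qf Ψ (M x ⊗ₖ (K x * (K x)ᴴ)) + k * qf Ψ (1 ⊗ₖ ((1 - K x)ᴴ * (1 - K x)))) := by
  have hSh : ∀ y, (S y)ᴴ = S y := fun y => by
    rw [hS]; simp only []; rw [conjTranspose_kronecker, (matRpow_half_mul (hN y)).2, conjTranspose_one]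
  have hSS : ∀ y, S y * S y = N y ⊗ₖ 1 := fun y => by
    rw [hS]; simp only []; rw [← mul_kronecker_mul, (matRpow_half_mul (hN y)).1, Matrix.one_mul]
  have a : ∑ y, fr ((T * S y)ᴴ * Ψ) = fr (Tᴴ * Ψ) := by
    have e : ∀ y, fr ((T * S y)ᴴ * Ψ) = qf (Tᴴ * Ψ) (S y * S y) := fun y => by
      unfold fr qf
      simp only [conjTranspose_mul, conjTranspose_conjTranspose, hSh, Matrix.mul_assoc]
    simp only [e, hSS]
    rw [qf_sum, ← sum_kron, hNsum, one_kronecker_one, qf, fr, Matrix.mul_one]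
  have b : fr (Tᴴ * Ψ) ≤ ∑ x, qf Ψ (M x ⊗ₖ (K x * (K x)ᴴ)) := by
    have := schwarz1 M hM hMsum (fun x => (K x)ᴴ) Ψ
    simp only [conjTranspose_conjTranspose] at this
    rw [hT, conjTranspose_sum]
    simpa only [conjTranspose_kronecker, (hM _).1.eq] using this
  have c : ∀ y, fr ((S y - T * S y) * S y * Ψ) ≤
      k * ∑ x, qf Ψ (N y ⊗ₖ ((1 - K x)ᴴ * (1 - K x))) := by
    intro y
    have e : (S y - T * S y) * S y * Ψ = (∑ x, M x ⊗ₖ (1 - K x)) * ((N y ⊗ₖ (1 : Matrix G G ℂ)) * Ψ) := by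
      have : ∑ x, M x ⊗ₖ (1 - K x) = 1 - T := by
        have h1 : ∀ x, M x ⊗ₖ (1 - K x) = M x ⊗ₖ 1 - M x ⊗ₖ K x := fun x => by
          ext ⟨i, j⟩ ⟨i', j'⟩
          simp [kroneckerMap_apply, mul_sub]
        simp only [h1]
        rw [Finset.sum_sub_distrib, ← sum_kron, hMsum, one_kronecker_one, hT]
      rw [this, ← hSS]
      simp only [Matrix.sub_mul, Matrix.one_mul, Matrix.mul_assoc]
    rw [e, Finset.mul_sum]
    refine (schwarz1 M hM hMsum _ _).trans (Finset.sum_le_sum fun x _ => ?_)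
    set L := (1 - K x)ᴴ * (1 - K x) with hL
    have hLp : L.PosSemidef := posSemidef_conjTranspose_mul_self _
    have h := qf_nonneg Ψ ((hk x y).kronecker hLp)
    have e2 : qf ((N y ⊗ₖ (1 : Matrix G G ℂ)) * Ψ) (M x ⊗ₖ L) = qf Ψ ((N y * M x * N y) ⊗ₖ L) := by
      unfold qf
      have : (N y * M x * N y) ⊗ₖ L = (N y ⊗ₖ 1) * (M x ⊗ₖ L) * (N y ⊗ₖ (1 : Matrix G G ℂ)) := by
        rw [← mul_kronecker_mul, ← mul_kronecker_mul, Matrix.one_mul, Matrix.mul_one]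
      rw [this, conjTranspose_mul, conjTranspose_kronecker, (hN y).1.eq, conjTranspose_one]
      simp only [Matrix.mul_assoc]
    have e3 : ((k : ℂ) • N y - N y * M x * N y) ⊗ₖ L =
        (k : ℂ) • (N y ⊗ₖ L) - (N y * M x * N y) ⊗ₖ L := by
      ext ⟨i, j⟩ ⟨i', j'⟩
      simp [kroneckerMap_apply, sub_mul, mul_assoc]
    rw [e3] at h
    rw [e2]
    unfold qf at h ⊢
    rw [Matrix.mul_sub, Matrix.sub_mul, trace_sub, Complex.sub_re, Matrix.mul_smul, Matrix.smul_mul,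
      trace_smul, smul_eq_mul, Complex.re_ofReal_mul] at h
    linarith
  rw [Finset.sum_add_distrib, ← Finset.mul_sum, a, Finset.sum_add_distrib, ← Finset.mul_sum,
    ← Finset.mul_sum]
  have d : ∑ y, fr ((S y - T * S y) * S y * Ψ) ≤
      k * ∑ x, qf Ψ (1 ⊗ₖ ((1 - K x)ᴴ * (1 - K x))) := by
    refine (Finset.sum_le_sum fun y _ => c y).trans (le_of_eq ?_)
    rw [← Finset.mul_sum, Finset.sum_comm]
    congr 1
    refine Finset.sum_congr rfl fun x _ => ?_
    rw [qf_sum, ← sum_kron, hNsum]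
  gcongr


lemma integ {ι κ : Type*} [Fintype ι] [Fintype κ] (w p q : ι → ℝ) (v a b : κ → ℝ)
    (hp : ∀ i, 0 ≤ p i) (hq : ∀ i, 0 ≤ q i) (ha : ∀ i, 0 ≤ a i) (hb : ∀ i, 0 ≤ b i)
    (k s : ℝ) (hk : 0 < k) (hs : s ∈ Set.Ioo (0 : ℝ) 1)
    (h : ∀ t : ℝ, 0 < t → ∑ i, w i * (if p i = 0 then 0 else t * q i ^ 2 / (q i + t * p i)) ≤
      ∑ j, v j * (t * a j * (k * b j) / (t * a j + k * b j))) :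
    ∑ i, w i * (fpow (p i) (-s) * fpow (q i) (1 + s)) ≤
      k ^ s * ∑ j, v j * (fpow (a j) (1 - s) * fpow (b j) s) := by
  obtain ⟨μ, hμ⟩ := Real.exists_measure_rpow_eq_integral_rpowIntegrand₀₁ hs
  have l : ∀ i, fpow (p i) (-s) * fpow (q i) (1 + s) =
      (if p i = 0 then 0 else q i) * (q i / p i) ^ s := by
    intro i
    unfold fpow
    have := hp i
    have := hq i
    split_ifs with h1 h2 h2
    · simp
    · simp
    · simp [h2]
    · have hp0 : 0 < p i := by positivity
      have hq0 : 0 < q i := by positivity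
      rw [Real.rpow_neg hp0.le, Real.rpow_add hq0, Real.rpow_one, Real.div_rpow hq0.le hp0.le]
      ring
  have r : ∀ j, k ^ s * (fpow (a j) (1 - s) * fpow (b j) s) = a j * (k * b j / a j) ^ s := by
    intro j
    unfold fpow
    have := ha j
    have := hb j
    split_ifs with h1 h2 h2
    · simp [h1]
    · simp [h1]
    · simp [h2, Real.zero_rpow hs.1.ne']
    · have hp0 : 0 < a j := by positivity
      have hq0 : 0 < b j := by positivity
      rw [Real.rpow_sub hp0, Real.rpow_one, Real.div_rpow (by positivity) hp0.le,
        Real.mul_rpow hk.le hq0.le]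
      ring
  have hx : ∀ i, 0 ≤ q i / p i := fun i => div_nonneg (hq i) (hp i)
  have hy : ∀ j, 0 ≤ k * b j / a j := fun j => div_nonneg (mul_nonneg hk.le (hb j)) (ha j)
  have L : ∑ i, w i * (fpow (p i) (-s) * fpow (q i) (1 + s)) =
      ∫ t in Set.Ioi 0, ∑ i, w i * ((if p i = 0 then 0 else q i) *
        Real.rpowIntegrand₀₁ s t (q i / p i)) ∂μ := by
    rw [MeasureTheory.integral_finsetSum]
    · refine Finset.sum_congr rfl fun i _ => ?_
      rw [MeasureTheory.integral_const_mul, MeasureTheory.integral_const_mul, l,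
        (hμ _ (hx i)).2]
    · intro i _
      exact ((hμ _ (hx i)).1.const_mul _).const_mul _
  have R : k ^ s * ∑ j, v j * (fpow (a j) (1 - s) * fpow (b j) s) =
      ∫ t in Set.Ioi 0, ∑ j, v j * (a j * Real.rpowIntegrand₀₁ s t (k * b j / a j)) ∂μ := by
    rw [MeasureTheory.integral_finsetSum, Finset.mul_sum]
    · refine Finset.sum_congr rfl fun j _ => ?_
      rw [MeasureTheory.integral_const_mul, MeasureTheory.integral_const_mul,
        ← (hμ _ (hy j)).2, ← r]
      ring
    · intro j _
      exact ((hμ _ (hy j)).1.const_mul _).const_mul _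
  rw [L, R]
  refine MeasureTheory.setIntegral_mono_on ?_ ?_ measurableSet_Ioi ?_
  · exact MeasureTheory.integrable_finsetSum _ fun i _ => ((hμ _ (hx i)).1.const_mul _).const_mul _
  · exact MeasureTheory.integrable_finsetSum _ fun j _ => ((hμ _ (hy j)).1.const_mul _).const_mul _
  · intro t ht
    have ht : 0 < t := ht
    have h' := mul_le_mul_of_nonneg_left (h t ht) (by positivity : 0 ≤ t ^ (s - 1) / t)
    rw [Finset.mul_sum, Finset.mul_sum] at h'
    convert h' using 1
    · refine Finset.sum_congr rfl fun i _ => ?_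
      have := hp i
      have := hq i
      split_ifs with h0
      · simp
      · have hp0 : 0 < p i := by positivity
        rw [Real.rpowIntegrand₀₁_eq_pow_div hs ht.le (hx i)]
        field_simp
        ring
    · refine Finset.sum_congr rfl fun j _ => ?_
      have := ha j
      have := hb j
      by_cases h0 : a j = 0
      · simp [h0]
      · have hp0 : 0 < a j := by positivity
        rw [Real.rpowIntegrand₀₁_eq_pow_div hs ht.le (hy j)]
        field_simp

lemma opt {n : Type*} [Fintype n] [DecidableEq n] {F U H V : Matrix n n ℂ} {p q : n → ℝ}
    (hF : Spec F U p) (hH : Spec H V q) (hp : ∀ i, 0 ≤ p i) (hq : ∀ i, 0 ≤ q i)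
    (k t : ℝ) (hk : 0 < k) (ht : 0 < t) :
    ∃ W : Matrix n n ℂ, t * (F * (W * Wᴴ)).trace.re + k * (H * ((1 - W)ᴴ * (1 - W))).trace.re =
      ∑ i, ∑ j, Complex.normSq ((Uᴴ * V) i j) * (t * p i * (k * q j) / (t * p i + k * q j)) := by
  set u := Uᴴ * V with hu
  let w : Matrix n n ℂ := Matrix.of fun i j => u i j * ((k * q j / (t * p i + k * q j) : ℝ) : ℂ)
  have h1 : (1 : Matrix n n ℂ) = U * u * Vᴴ := by
    rw [hu]
    calc (1 : Matrix n n ℂ) = (U * Uᴴ) * (V * Vᴴ) := by rw [hF.2.1, hH.2.1, Matrix.one_mul]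
      _ = _ := by simp only [Matrix.mul_assoc]
  have e1 : (F * ((U * w * Vᴴ) * (U * w * Vᴴ)ᴴ)).trace.re = ∑ i, ∑ j, Complex.normSq (w i j) * p i := by
    have := trace_diag_mul w p (fun _ => 1)
    simp only [mul_one, Complex.ofReal_one, diagonal_one, Matrix.mul_one] at this
    rw [← this]
    congr 1
    calc _ = (U * (diagonal (fun i => (p i : ℂ)) * (Uᴴ * U) * w * (Vᴴ * V) * wᴴ * Uᴴ)).trace := by
          conv_lhs => rw [hF.2.2]
          simp only [conjTranspose_mul, conjTranspose_conjTranspose, Matrix.mul_assoc]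
      _ = _ := by
        rw [trace_mul_comm]
        simp only [hF.1, hH.1, Matrix.mul_assoc, Matrix.mul_one, Matrix.one_mul]
  have e2 : (H * ((1 - U * w * Vᴴ)ᴴ * (1 - U * w * Vᴴ))).trace.re =
      ∑ i, ∑ j, Complex.normSq ((u - w) i j) * q j := by
    have := trace_diag_mul (u - w) (fun _ => 1) q
    simp only [one_mul, Complex.ofReal_one, diagonal_one, Matrix.one_mul] at this
    rw [← this]
    congr 1
    have e : 1 - U * w * Vᴴ = U * (u - w) * Vᴴ := by
      rw [Matrix.mul_sub, Matrix.sub_mul, ← h1]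
    rw [e]
    calc _ = (V * (diagonal (fun i => (q i : ℂ)) * (Vᴴ * V) * (u - w)ᴴ * (Uᴴ * U) * (u - w) * Vᴴ)).trace := by
          conv_lhs => rw [hH.2.2]
          simp only [conjTranspose_mul, conjTranspose_conjTranspose, Matrix.mul_assoc]
      _ = (diagonal (fun i => (q i : ℂ)) * ((u - w)ᴴ * (u - w))).trace := by
        rw [trace_mul_comm]
        simp only [hF.1, hH.1, Matrix.mul_assoc, Matrix.mul_one, Matrix.one_mul]
      _ = _ := by
        rw [← Matrix.mul_assoc, trace_mul_comm, Matrix.mul_assoc]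
  refine ⟨U * w * Vᴴ, ?_⟩
  rw [e1, e2, Finset.mul_sum, Finset.mul_sum, ← Finset.sum_add_distrib]
  refine Finset.sum_congr rfl fun i _ => ?_
  rw [Finset.mul_sum, Finset.mul_sum, ← Finset.sum_add_distrib]
  refine Finset.sum_congr rfl fun j _ => ?_
  have f1 : w i j = u i j * ((k * q j / (t * p i + k * q j) : ℝ) : ℂ) := rfl
  have f2 : (u - w) i j = u i j * ((1 - k * q j / (t * p i + k * q j) : ℝ) : ℂ) := by
    rw [Matrix.sub_apply, f1]; push_cast; ring
  rw [f1, f2, Complex.normSq_mul, Complex.normSq_mul, Complex.normSq_ofReal, Complex.normSq_ofReal]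
  have := hp i
  have := hq j
  by_cases h0 : t * p i + k * q j = 0
  · have a1 : 0 ≤ t * p i := by positivity
    have a2 : 0 ≤ k * q j := by positivity
    have : p i = 0 := by
      have : t * p i = 0 := by linarith
      simpa [ht.ne'] using this
    have : q j = 0 := by
      have : k * q j = 0 := by linarith
      simpa [hk.ne'] using this
    simp [*]
  · field_simp
    ring

/-- Purification-type reshaping. -/
def resh {A B C D : Type*} (R : Matrix (A × B × C) D ℂ) : Matrix (A × B × D) C ℂ :=
  Matrix.of fun z c => R (z.1, z.2.1, c) z.2.2

lemma kron_one_mul_apply {A G : Type*} [Fintype A] [Fintype G] [DecidableEq G] {J : Type*}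
    (M : Matrix A A ℂ) (T : Matrix (A × G) J ℂ) (a : A) (g : G) (j : J) :
    ((M ⊗ₖ (1 : Matrix G G ℂ)) * T) (a, g) j = ∑ a', M a a' * T (a', g) j := by
  rw [mul_apply, Fintype.sum_prod_type]
  refine Finset.sum_congr rfl fun a' _ => ?_
  simp [kroneckerMap_apply, one_apply]

lemma qf_resh {A B C D : Type*} [Fintype A] [DecidableEq A] [Fintype B] [DecidableEq B]
    [Fintype C] [DecidableEq C] [Fintype D] [DecidableEq D]
    (R : Matrix (A × B × C) D ℂ) (M : Matrix A A ℂ) (K : Matrix B B ℂ) :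
    qf (resh R) (M ⊗ₖ (K ⊗ₖ (1 : Matrix D D ℂ))) =
      (trFstThird ((M ⊗ₖ (1 : Matrix (B × C) (B × C) ℂ)) * (R * Rᴴ)) * K).trace.re := by
  unfold qf
  congr 1
  have l : ((resh R)ᴴ * (M ⊗ₖ (K ⊗ₖ (1 : Matrix D D ℂ))) * resh R).trace =
      ∑ b', ∑ b, ∑ a, ∑ c, ∑ a', ∑ d,
        M a a' * (R (a', b', c) d * star (R (a, b, c) d)) * K b b' := by
    have : ∀ z c, ((M ⊗ₖ (K ⊗ₖ (1 : Matrix D D ℂ))) * resh R) z c =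
        ∑ a', ∑ b', M z.1 a' * K z.2.1 b' * R (a', b', c) z.2.2 := by
      intro z c
      simp only [mul_apply, Fintype.sum_prod_type, kroneckerMap_apply, one_apply, resh, of_apply]
      simp
    simp only [trace, diag_apply, Matrix.mul_assoc]
    simp only [mul_apply (M := (resh R)ᴴ), this, conjTranspose_apply, Fintype.sum_prod_type,
      Finset.mul_sum]
    simp only [resh, of_apply]
    calc _ = ∑ c, ∑ a, ∑ b, ∑ d, ∑ b', ∑ a', M a a' * (R (a', b', c) d * star (R (a, b, c) d)) * K b b' := by
          refine Finset.sum_congr rfl fun c _ => Finset.sum_congr rfl fun a _ =>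
            Finset.sum_congr rfl fun b _ => Finset.sum_congr rfl fun d _ => ?_
          rw [Finset.sum_comm]
          refine Finset.sum_congr rfl fun b' _ => Finset.sum_congr rfl fun a' _ => ?_
          ring
      _ = ∑ c, ∑ a, ∑ b, ∑ b', ∑ a', ∑ d, M a a' * (R (a', b', c) d * star (R (a, b, c) d)) * K b b' := by
          refine Finset.sum_congr rfl fun c _ => Finset.sum_congr rfl fun a _ =>
            Finset.sum_congr rfl fun b _ => ?_
          rw [Finset.sum_comm]
          refine Finset.sum_congr rfl fun b' _ => ?_
          rw [Finset.sum_comm]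
      _ = ∑ c, ∑ a, ∑ b', ∑ b, ∑ a', ∑ d, M a a' * (R (a', b', c) d * star (R (a, b, c) d)) * K b b' := by
          refine Finset.sum_congr rfl fun c _ => Finset.sum_congr rfl fun a _ => ?_
          rw [Finset.sum_comm]
      _ = ∑ a, ∑ b', ∑ b, ∑ c, ∑ a', ∑ d, M a a' * (R (a', b', c) d * star (R (a, b, c) d)) * K b b' := by
          rw [Finset.sum_comm]
          refine Finset.sum_congr rfl fun a _ => ?_
          rw [Finset.sum_comm]
          refine Finset.sum_congr rfl fun b' _ => ?_
          rw [Finset.sum_comm]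
      _ = _ := by
          rw [Finset.sum_comm]
          refine Finset.sum_congr rfl fun b' _ => ?_
          rw [Finset.sum_comm]
  rw [l]
  simp only [trace, diag_apply]
  refine Finset.sum_congr rfl fun b' _ => ?_
  rw [mul_apply]
  refine Finset.sum_congr rfl fun b _ => ?_
  simp only [trFstThird, of_apply, kron_one_mul_apply, mul_apply (M := R), conjTranspose_apply,
    Finset.mul_sum, Finset.sum_mul]

lemma resh_gram {A B C D : Type*} [Fintype A] [DecidableEq A] [Fintype B] [DecidableEq B]
    [Fintype C] [DecidableEq C] [Fintype D] [DecidableEq D]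
    (R : Matrix (A × B × C) D ℂ) (N : Matrix A A ℂ) :
    (resh R)ᴴ * (N ⊗ₖ (1 : Matrix (B × D) (B × D) ℂ)) * resh R =
      (trFstSnd ((N ⊗ₖ (1 : Matrix (B × C) (B × C) ℂ)) * (R * Rᴴ)))ᵀ := by
  ext k k'
  rw [Matrix.mul_assoc, transpose_apply]
  simp only [trFstSnd, of_apply, kron_one_mul_apply, mul_apply (M := R), conjTranspose_apply,
    mul_apply (M := (resh R)ᴴ), Fintype.sum_prod_type]
  simp only [resh, of_apply, Finset.mul_sum]
  refine Finset.sum_congr rfl fun a _ => Finset.sum_congr rfl fun b _ => ?_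
  rw [Finset.sum_comm]
  refine Finset.sum_congr rfl fun a' _ => Finset.sum_congr rfl fun d _ => ?_
  ring

lemma Spec.transpose {n : Type*} [Fintype n] [DecidableEq n] {A U : Matrix n n ℂ} {d : n → ℝ}
    (h : Spec A U d) : Spec Aᵀ Uᴴᵀ d := by
  have e : Uᴴᵀᴴ = Uᵀ := by ext i j; simp
  refine ⟨?_, ?_, ?_⟩
  · rw [e, ← transpose_mul, h.1, transpose_one]
  · rw [e, ← transpose_mul, h.2.1, transpose_one]
  · rw [e]; conv_lhs => rw [h.2.2]
    simp only [transpose_mul, diagonal_transpose, Matrix.mul_assoc]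

lemma normSq_transpose {n : Type*} [Fintype n] [DecidableEq n] (U V : Matrix n n ℂ) (i j : n) :
    Complex.normSq ((Uᴴᵀᴴ * Vᴴᵀ) i j) = Complex.normSq ((Uᴴ * V) i j) := by
  have e : Uᴴᵀᴴ = Uᵀ := by ext i j; simp
  have : (Uᴴ * V) i j = star ((Uᵀ * Vᴴᵀ) i j) := by
    rw [← transpose_mul, transpose_apply, ← conjTranspose_apply, conjTranspose_mul,
      conjTranspose_conjTranspose]
  rw [e, this, RCLike.star_def, Complex.normSq_conj]


section
variable {A B C : Type*} [Fintype A] [DecidableEq A] [Fintype B] [DecidableEq B]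
    [Fintype C] [DecidableEq C]

noncomputable def FB (ρ : Matrix (A × B × C) (A × B × C) ℂ) (M : Matrix A A ℂ) : Matrix B B ℂ :=
  trFstThird ((M ⊗ₖ (1 : Matrix (B × C) (B × C) ℂ)) * ρ)

noncomputable def FC (ρ : Matrix (A × B × C) (A × B × C) ℂ) (M : Matrix A A ℂ) : Matrix C C ℂ :=
  trFstSnd ((M ⊗ₖ (1 : Matrix (B × C) (B × C) ℂ)) * ρ)

def swp (ρ : Matrix (A × B × C) (A × B × C) ℂ) : Matrix (A × C × B) (A × C × B) ℂ :=
  ρ.submatrix (fun z => (z.1, z.2.2, z.2.1)) (fun z => (z.1, z.2.2, z.2.1))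

lemma FC_swp (ρ : Matrix (A × B × C) (A × B × C) ℂ) (M : Matrix A A ℂ) : FC (swp ρ) M = FB ρ M := by
  ext i j
  simp only [FC, FB, trFstThird, trFstSnd, of_apply, kron_one_mul_apply, swp, submatrix_apply]

lemma FB_swp (ρ : Matrix (A × B × C) (A × B × C) ℂ) (M : Matrix A A ℂ) : FB (swp ρ) M = FC ρ M := by
  ext i j
  simp only [FC, FB, trFstThird, trFstSnd, of_apply, kron_one_mul_apply, swp, submatrix_apply]

lemma trace_swp (ρ : Matrix (A × B × C) (A × B × C) ℂ) : (swp ρ).trace = ρ.trace := by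
  simp only [trace, diag_apply, swp, submatrix_apply, Fintype.sum_prod_type]
  refine Finset.sum_congr rfl fun a _ => ?_
  rw [Finset.sum_comm]

lemma FC_psd {ρ : Matrix (A × B × C) (A × B × C) ℂ} (hρ : ρ.PosSemidef) {M : Matrix A A ℂ}
    (hM : M.PosSemidef) : (FC ρ M).PosSemidef := by
  have hR := matRpow_half_mul hρ
  have h := resh_gram (matRpow ρ (1/2)) M
  rw [hR.2, hR.1] at h
  have h2 : ((FC ρ M)ᵀ).PosSemidef := by
    rw [FC, ← h]
    exact (hM.kronecker PosSemidef.one).conjTranspose_mul_mul_same _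
  simpa using h2.transpose

lemma swp_psd {ρ : Matrix (A × B × C) (A × B × C) ℂ} (hρ : ρ.PosSemidef) : (swp ρ).PosSemidef :=
  hρ.submatrix _

lemma FB_psd {ρ : Matrix (A × B × C) (A × B × C) ℂ} (hρ : ρ.PosSemidef) {M : Matrix A A ℂ}
    (hM : M.PosSemidef) : (FB ρ M).PosSemidef := by
  rw [← FC_swp]; exact FC_psd (swp_psd hρ) hM

lemma FC_sum {X : Type*} [Fintype X] (ρ : Matrix (A × B × C) (A × B × C) ℂ) (M : X → Matrix A A ℂ) :
    ∑ x, FC ρ (M x) = FC ρ (∑ x, M x) := by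
  ext i j
  rw [Matrix.sum_apply]
  simp only [FC, trFstSnd, of_apply]
  rw [Finset.sum_comm]
  refine Finset.sum_congr rfl fun a _ => ?_
  rw [Finset.sum_comm]
  refine Finset.sum_congr rfl fun b _ => ?_
  rw [sum_kron, Matrix.sum_mul, Matrix.sum_apply]

lemma FC_sub (ρ : Matrix (A × B × C) (A × B × C) ℂ) (M N : Matrix A A ℂ) :
    FC ρ (M - N) = FC ρ M - FC ρ N := by
  ext i j
  simp only [FC, trFstSnd, of_apply, kron_one_mul_apply, Matrix.sub_apply, sub_mul,
    Finset.sum_sub_distrib]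

lemma FB_sum {X : Type*} [Fintype X] (ρ : Matrix (A × B × C) (A × B × C) ℂ) (M : X → Matrix A A ℂ) :
    ∑ x, FB ρ (M x) = FB ρ (∑ x, M x) := by
  simp only [← FC_swp, FC_sum]

lemma FC_one_trace (ρ : Matrix (A × B × C) (A × B × C) ℂ) : (FC ρ 1).trace = ρ.trace := by
  simp only [FC, one_kronecker_one, Matrix.one_mul, trace, diag_apply, trFstSnd, of_apply,
    Fintype.sum_prod_type]
  rw [Finset.sum_comm]
  refine Finset.sum_congr rfl fun a _ => ?_
  rw [Finset.sum_comm]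

theorem core {X Y : Type*} [Fintype X] [Fintype Y]
    (ρ : Matrix (A × B × C) (A × B × C) ℂ) (hρ : ρ.PosSemidef)
    (M : X → Matrix A A ℂ) (N : Y → Matrix A A ℂ)
    (hM : ∀ x, (M x).PosSemidef) (hMsum : ∑ x, M x = 1)
    (hN : ∀ y, (N y).PosSemidef) (hNsum : ∑ y, N y = 1) (k : ℝ) (hk0 : 0 < k)
    (hk : ∀ x y, ((k : ℂ) • N y - N y * M x * N y).PosSemidef)
    (s : ℝ) (hs : s ∈ Set.Ioo (0 : ℝ) 1) :
    ∑ y, (matRpow (FC ρ (N y)) (1 + s) * matRpow (FC ρ 1) (-s)).trace.re ≤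
      k ^ s * ∑ x, (matRpow (FB ρ (M x)) (1 - s) * matRpow (FB ρ 1) s).trace.re := by
  obtain ⟨U, p, hU, hp⟩ := spec_exists (FC_psd hρ (PosSemidef.one (n := A) (R := ℂ)))
  choose V q hV hq using fun y => spec_exists (FC_psd hρ (hN y))
  choose U' p' hU' hp' using fun x => spec_exists (FB_psd hρ (hM x))
  obtain ⟨V', q', hV', hq'⟩ := spec_exists (FB_psd hρ (PosSemidef.one (n := A) (R := ℂ)))
  have l : ∀ y, (matRpow (FC ρ (N y)) (1 + s) * matRpow (FC ρ 1) (-s)).trace.re =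
      ∑ i, ∑ j, Complex.normSq ((Uᴴ * V y) i j) * (fpow (p i) (-s) * fpow (q y j) (1 + s)) := by
    intro y
    rw [trace_mul_comm, trace_rpow hU (hV y)]
  simp only [l, trace_rpow (hU' _) hV']
  have := integ (ι := Y × C × C) (κ := X × B × B)
    (fun z => Complex.normSq ((Uᴴ * V z.1) z.2.1 z.2.2)) (fun z => p z.2.1) (fun z => q z.1 z.2.2)
    (fun z => Complex.normSq (((U' z.1)ᴴ * V') z.2.1 z.2.2)) (fun z => p' z.1 z.2.1)
    (fun z => q' z.2.2) (fun _ => hp _) (fun _ => hq _ _) (fun _ => hp' _ _) (fun _ => hq' _)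
    k s hk0 hs ?_
  · simpa only [Fintype.sum_prod_type] using this
  intro t ht
  simp only [Fintype.sum_prod_type]
  choose W hW using fun x => opt (hU' x) hV' (hp' x) hq' k t hk0 ht
  have hR := matRpow_half_mul hρ
  set R := matRpow ρ (1/2) with hRdef
  have gram : ∀ N : Matrix A A ℂ, (resh R)ᴴ * (N ⊗ₖ (1 : Matrix (B × (A × B × C)) (B × (A × B × C)) ℂ)) * resh R
      = (FC ρ N)ᵀ := by
    intro N
    rw [resh_gram, hR.2, hR.1]; rfl
  have hqf : ∀ (M : Matrix A A ℂ) (K : Matrix B B ℂ),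
      qf (resh R) (M ⊗ₖ (K ⊗ₖ (1 : Matrix (A × B × C) (A × B × C) ℂ))) = (FB ρ M * K).trace.re := by
    intro M K
    rw [qf_resh, hR.2, hR.1]; rfl
  have mid := middle M N hM hMsum hN hNsum k hk
    (fun x => W x ⊗ₖ (1 : Matrix (A × B × C) (A × B × C) ℂ)) (resh R) t _ rfl _ rfl ht
  have e1 : ∀ x, (1 : Matrix (B × (A × B × C)) (B × (A × B × C)) ℂ) -
      W x ⊗ₖ (1 : Matrix (A × B × C) (A × B × C) ℂ) = (1 - W x) ⊗ₖ 1 := by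
    intro x
    rw [← one_kronecker_one]
    ext ⟨i, j⟩ ⟨i', j'⟩
    simp only [Matrix.sub_apply, kroneckerMap_apply, sub_mul]
  simp only [e1, conjTranspose_kronecker, ← mul_kronecker_mul, conjTranspose_one, Matrix.one_mul,
    hqf, hW] at mid
  refine le_trans (Finset.sum_le_sum fun y _ => ?_) mid
  have L := lemmaL (resh R) (matRpow (N y) (1/2) ⊗ₖ (1 : Matrix (B × (A × B × C)) (B × (A × B × C)) ℂ))
    ((∑ x, M x ⊗ₖ (W x ⊗ₖ (1 : Matrix (A × B × C) (A × B × C) ℂ))) *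
      (matRpow (N y) (1/2) ⊗ₖ (1 : Matrix (B × (A × B × C)) (B × (A × B × C)) ℂ)))
    (by rw [conjTranspose_kronecker, (matRpow_half_mul (hN y)).2, conjTranspose_one])
    (U := Uᴴᵀ) (V := (V y)ᴴᵀ) (p := p) (q := q y)
    (by
      have := gram 1
      rw [one_kronecker_one, Matrix.mul_one] at this
      rw [this]
      exact hU.transpose)
    (by
      rw [← mul_kronecker_mul, (matRpow_half_mul (hN y)).1, Matrix.one_mul, gram]
      exact (hV y).transpose) hp (hq y) t ht
  simp only [normSq_transpose] at L
  exact L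

lemma sum_erase_psd {Y : Type*} [Fintype Y] [DecidableEq Y] (N : Y → Matrix A A ℂ)
    (hN : ∀ y, (N y).PosSemidef) (hNsum : ∑ y, N y = 1) (y : Y) : (1 - N y).PosSemidef := by
  rw [← hNsum, ← Finset.sum_erase_add _ _ (Finset.mem_univ y), add_sub_cancel_right]
  exact posSemidef_sum _ fun i _ => hN i

lemma fpow_nonneg {p : ℝ} (hp : 0 ≤ p) (t : ℝ) : 0 ≤ fpow p t := by
  unfold fpow; split_ifs <;> positivity

lemma fpow_pos {p : ℝ} (hp : 0 < p) (t : ℝ) : 0 < fpow p t := by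
  unfold fpow; rw [if_neg hp.ne']; positivity

theorem core_pos {Y : Type*} [Fintype Y] [DecidableEq Y]
    (ρ : Matrix (A × B × C) (A × B × C) ℂ) (hρ : ρ.PosSemidef) (hρ1 : ρ.trace = 1)
    (N : Y → Matrix A A ℂ)
    (hN : ∀ y, (N y).PosSemidef) (hNsum : ∑ y, N y = 1) (a b : ℝ) :
    0 < ∑ y, (matRpow (FC ρ (N y)) a * matRpow (FC ρ 1) b).trace.re := by
  obtain ⟨U, p, hU, hp⟩ := spec_exists (FC_psd hρ (PosSemidef.one (n := A) (R := ℂ)))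
  choose V q hV hq using fun y => spec_exists (FC_psd hρ (hN y))
  have l : ∀ y, (matRpow (FC ρ (N y)) a * matRpow (FC ρ 1) b).trace.re =
      ∑ i, ∑ j, Complex.normSq ((Uᴴ * V y) i j) * (fpow (p i) b * fpow (q y j) a) := by
    intro y
    rw [trace_mul_comm, trace_rpow hU (hV y)]
  simp only [l]
  have nn : ∀ y i j, 0 ≤ Complex.normSq ((Uᴴ * V y) i j) * (fpow (p i) b * fpow (q y j) a) :=
    fun y i j => mul_nonneg (Complex.normSq_nonneg _) (mul_nonneg (fpow_nonneg (hp i) _)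
      (fpow_nonneg (hq y j) _))
  obtain ⟨y, j, hqj⟩ : ∃ y j, q y j ≠ 0 := by
    by_contra hcon
    push Not at hcon
    have h0 : ∀ y, FC ρ (N y) = 0 := by
      intro y
      rw [(hV y).2.2]
      simp [hcon]
    have : FC ρ 1 = 0 := by rw [← hNsum, ← FC_sum]; simp [h0]
    have h1 := FC_one_trace ρ
    rw [this, hρ1] at h1
    simp at h1
  have hqj0 : 0 < q y j := lt_of_le_of_ne (hq y j) (Ne.symm hqj)
  have hd : (FC ρ 1 - FC ρ (N y)).PosSemidef := by
    rw [← FC_sub]; exact FC_psd hρ (sum_erase_psd N hN hNsum y)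
  have hd2 := (hd.conjTranspose_mul_mul_same (V y)).diag_nonneg (i := j)
  have e1 : (V y)ᴴ * FC ρ (N y) * V y = diagonal (fun i => (q y i : ℂ)) := by
    calc _ = ((V y)ᴴ * V y) * diagonal (fun i => (q y i : ℂ)) * ((V y)ᴴ * V y) := by
          conv_lhs => rw [(hV y).2.2]
          simp only [Matrix.mul_assoc]
      _ = _ := by rw [(hV y).1, Matrix.one_mul, Matrix.mul_one]
  have e2 : ((V y)ᴴ * FC ρ 1 * V y) j j = ((∑ i, Complex.normSq ((Uᴴ * V y) i j) * p i : ℝ) : ℂ) := by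
    have : (V y)ᴴ * FC ρ 1 * V y = (Uᴴ * V y)ᴴ * (diagonal (fun i => (p i : ℂ)) * (Uᴴ * V y)) := by
      conv_lhs => rw [hU.2.2]
      simp only [conjTranspose_mul, conjTranspose_conjTranspose, Matrix.mul_assoc]
    rw [this, mul_apply]
    push_cast
    refine Finset.sum_congr rfl fun i _ => ?_
    rw [diagonal_mul, conjTranspose_apply, ← Complex.mul_conj, RCLike.star_def]
    ring
  rw [Matrix.mul_sub, Matrix.sub_mul, Matrix.sub_apply, e1, e2, diagonal_apply_eq,
    ← Complex.ofReal_sub] at hd2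
  have hd3 : 0 ≤ (∑ i, Complex.normSq ((Uᴴ * V y) i j) * p i) - q y j := by exact_mod_cast hd2
  have hd4 : (0 : ℝ) < ∑ i, Complex.normSq ((Uᴴ * V y) i j) * p i := by linarith
  obtain ⟨i, _, hi⟩ := Finset.exists_ne_zero_of_sum_ne_zero hd4.ne'
  have hn : 0 < Complex.normSq ((Uᴴ * V y) i j) :=
    lt_of_le_of_ne (Complex.normSq_nonneg _) (Ne.symm (left_ne_zero_of_mul hi))
  have hpi : 0 < p i := lt_of_le_of_ne (hp i) (Ne.symm (right_ne_zero_of_mul hi))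
  refine Finset.sum_pos' (fun y _ => Finset.sum_nonneg fun i _ => Finset.sum_nonneg fun j _ => nn y i j)
    ⟨y, Finset.mem_univ _, ?_⟩
  refine Finset.sum_pos' (fun i _ => Finset.sum_nonneg fun j _ => nn y i j) ⟨i, Finset.mem_univ _, ?_⟩
  refine Finset.sum_pos' (fun j _ => nn y i j) ⟨j, Finset.mem_univ _, ?_⟩
  exact mul_pos hn (mul_pos (fpow_pos hpi _) (fpow_pos hqj0 _))

end

lemma norm_sq_clm {n : Type*} [Fintype n] [DecidableEq n] (Z : Matrix n n ℂ) (v : n → ℂ) :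
    ((‖Matrix.toEuclideanCLM (𝕜 := ℂ) Z (WithLp.toLp 2 v)‖ ^ 2 : ℝ) : ℂ) = star v ⬝ᵥ ((Zᴴ * Z) *ᵥ v) := by
  rw [Matrix.toEuclideanCLM_toLp, EuclideanSpace.norm_sq_eq, ← mulVec_mulVec, dotProduct_mulVec,
    ← star_mulVec, dotProduct]
  push_cast
  refine Finset.sum_congr rfl fun i _ => ?_
  rw [Pi.star_apply, RCLike.star_def, Complex.conj_mul']

lemma psd_of_norm {n : Type*} [Fintype n] [DecidableEq n] (Z : Matrix n n ℂ) (c : ℝ)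
    (h : ‖Matrix.toEuclideanCLM (𝕜 := ℂ) Z‖ ≤ c) :
    (((c ^ 2 : ℝ) : ℂ) • (1 : Matrix n n ℂ) - Zᴴ * Z).PosSemidef := by
  refine PosSemidef.of_dotProduct_mulVec_nonneg ?_ fun v => ?_
  · unfold Matrix.IsHermitian
    simp [conjTranspose_sub, conjTranspose_smul]
  · rw [sub_mulVec, dotProduct_sub, ← norm_sq_clm]
    have e : star v ⬝ᵥ ((((c ^ 2 : ℝ) : ℂ) • (1 : Matrix n n ℂ)) *ᵥ v) =
        ((c ^ 2 * ‖(WithLp.toLp 2 v : EuclideanSpace ℂ n)‖ ^ 2 : ℝ) : ℂ) := by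
      have := norm_sq_clm (1 : Matrix n n ℂ) v
      rw [Matrix.toEuclideanCLM_toLp, one_mulVec, conjTranspose_one, Matrix.one_mul, one_mulVec] at this
      rw [smul_mulVec, one_mulVec, dotProduct_smul, ← this, smul_eq_mul]
      push_cast; ring
    rw [e, ← Complex.ofReal_sub, Complex.zero_le_real, sub_nonneg, ← mul_pow]
    gcongr
    exact (ContinuousLinearMap.le_opNorm _ _).trans (by gcongr)

lemma norm_of_psd {n : Type*} [Fintype n] [DecidableEq n] (Z : Matrix n n ℂ)
    (h : (1 - Zᴴ * Z).PosSemidef) : ‖Matrix.toEuclideanCLM (𝕜 := ℂ) Z‖ ≤ 1 := by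
  refine ContinuousLinearMap.opNorm_le_bound _ zero_le_one fun v => ?_
  have := h.dotProduct_mulVec_nonneg (WithLp.ofLp v)
  rw [sub_mulVec, dotProduct_sub, ← norm_sq_clm] at this
  have e := norm_sq_clm (1 : Matrix n n ℂ) (WithLp.ofLp v)
  rw [Matrix.toEuclideanCLM_toLp, one_mulVec, conjTranspose_one, Matrix.one_mul] at e
  rw [← e, ← Complex.ofReal_sub, Complex.zero_le_real, sub_nonneg] at this
  rw [one_mul]
  exact le_of_sq_le_sq this (norm_nonneg _)

lemma norm_le_one_povm {n : Type*} [Fintype n] [DecidableEq n] (M N : Matrix n n ℂ)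
    (hM : M.PosSemidef) (hN : N.PosSemidef) (hM1 : (1 - M).PosSemidef) (hN1 : (1 - N).PosSemidef) :
    ‖Matrix.toEuclideanCLM (𝕜 := ℂ) (matRpow M (1/2) * matRpow N (1/2))‖ ≤ 1 := by
  apply norm_of_psd
  have a := matRpow_half_mul hM
  have b := matRpow_half_mul hN
  have h := (hM1.conjTranspose_mul_mul_same (matRpow N (1/2))).add hN1
  convert h using 1
  rw [conjTranspose_mul, a.2, b.2, Matrix.mul_assoc, ← Matrix.mul_assoc (matRpow M _), a.1,
    Matrix.mul_sub, Matrix.mul_one, Matrix.sub_mul, b.1, Matrix.mul_assoc]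
  abel

lemma psd_povm {n : Type*} [Fintype n] [DecidableEq n] (M N : Matrix n n ℂ)
    (hM : M.PosSemidef) (hN : N.PosSemidef) (c : ℝ) (hc0 : 0 ≤ c) (hc1 : c ≤ 1)
    (h : ‖Matrix.toEuclideanCLM (𝕜 := ℂ) (matRpow M (1/2) * matRpow N (1/2))‖ ≤ c) :
    ((c : ℂ) • N - N * M * N).PosSemidef := by
  have a := matRpow_half_mul hM
  have b := matRpow_half_mul hN
  have h1 := (psd_of_norm _ c h).conjTranspose_mul_mul_same (matRpow N (1/2))
  have h2 : (((c - c ^ 2 : ℝ) : ℂ) • N).PosSemidef :=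
    hN.smul (by rw [Complex.zero_le_real]; nlinarith)
  convert h1.add h2 using 1
  have e : (matRpow N (1/2)) * (matRpow N (1/2) * (matRpow M (1/2) * (matRpow M (1/2) * (matRpow N (1/2)
    * matRpow N (1/2))))) = N * M * N := by
    rw [b.1, ← Matrix.mul_assoc (matRpow M _), a.1, ← Matrix.mul_assoc, b.1, Matrix.mul_assoc]
  rw [conjTranspose_mul, a.2, b.2, Matrix.mul_sub, Matrix.sub_mul, Matrix.mul_smul, Matrix.mul_one,
    Matrix.smul_mul, b.1]
  simp only [Matrix.mul_assoc] at e ⊢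
  rw [e]
  push_cast
  rw [sub_smul]
  abel

open scoped Matrix.Norms.L2Operator in
lemma norm_swap {n : Type*} [Fintype n] [DecidableEq n] (M N : Matrix n n ℂ)
    (hM : M.PosSemidef) (hN : N.PosSemidef) :
    ‖Matrix.toEuclideanCLM (𝕜 := ℂ) (matRpow N (1/2) * matRpow M (1/2))‖ =
    ‖Matrix.toEuclideanCLM (𝕜 := ℂ) (matRpow M (1/2) * matRpow N (1/2))‖ := by
  rw [Matrix.l2_opNorm_toEuclideanCLM, Matrix.l2_opNorm_toEuclideanCLM,
    ← Matrix.l2_opNorm_conjTranspose, conjTranspose_mul, (matRpow_half_mul hM).2,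
    (matRpow_half_mul hN).2]

/-- The final logarithmic step. -/
lemma final_log (Qa Qb c s : ℝ) (hs : 0 < s) (hc : 0 < c) (hQb : 0 < Qb) (h : Qb ≤ c ^ s * Qa) :
    Real.log (1 / c) ≤ s⁻¹ * Real.log Qa - s⁻¹ * Real.log Qb := by
  have hcs : 0 < c ^ s := Real.rpow_pos_of_pos hc s
  have hQa : 0 < Qa := by
    by_contra hn
    push Not at hn
    nlinarith
  have h1 := Real.log_le_log hQb h
  rw [Real.log_mul hcs.ne' hQa.ne', Real.log_rpow hc] at h1
  rw [one_div, Real.log_inv, ← mul_sub, ← div_eq_inv_mul, le_div_iff₀ hs]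
  linarith


lemma trFst_blk {X B : Type*} [DecidableEq X] [Fintype X] (F : X → Matrix B B ℂ) :
    trFst (blk F) = ∑ x, F x := by
  ext i j
  simp [trFst, blk, Matrix.sum_apply]

lemma renyi_blk {X B : Type*} [DecidableEq X] [Fintype X] [Fintype B] [DecidableEq B]
    (F : X → Matrix B B ℂ) (G : Matrix B B ℂ) (h : ∀ x, (F x).PosSemidef) (hG : G.PosSemidef)
    (t : ℝ) : renyiDiv t (blk F) ((1 : Matrix X X ℂ) ⊗ₖ G) =
      (t - 1)⁻¹ * Real.log (∑ x, (matRpow (F x) t * matRpow G (1 - t)).trace.re) := by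
  rw [renyiDiv, one_kron_eq_blk, matRpow_blk F h, matRpow_blk _ (fun _ => hG), blk_mul, blk_trace,
    Complex.re_sum]

theorem uncertainty_down {A B C X Y : Type*}
    [Fintype A] [DecidableEq A] [Fintype B] [DecidableEq B] [Fintype C] [DecidableEq C]
    [Fintype X] [DecidableEq X] [Nonempty X] [Fintype Y] [DecidableEq Y] [Nonempty Y]
    (ρ : Matrix (A × B × C) (A × B × C) ℂ) (hρ : ρ.PosSemidef) (hρ1 : ρ.trace = 1)
    (M : X → Matrix A A ℂ) (N : Y → Matrix A A ℂ)
    (hM : ∀ x, (M x).PosSemidef) (hMsum : ∑ x, M x = 1)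
    (hN : ∀ y, (N y).PosSemidef) (hNsum : ∑ y, N y = 1)
    (c : ℝ)
    (hc : c = ⨆ x : X, ⨆ y : Y, ‖Matrix.toEuclideanCLM (𝕜 := ℂ)
      (matRpow (M x) (1 / 2) * matRpow (N y) (1 / 2))‖)
    (α β : ℝ) (hα : α ∈ Set.Ioo (0 : ℝ) 2) (hβ : β ∈ Set.Ioo (0 : ℝ) 2)
    (hab : α + β = 2) (hα1 : α ≠ 1) :
    let ρXB : Matrix (X × B) (X × B) ℂ := Matrix.of fun p p' =>
      if p.1 = p'.1 then
        trFstThird ((M p.1 ⊗ₖ (1 : Matrix (B × C) (B × C) ℂ)) * ρ) p.2 p'.2 else 0;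
    let ρYC : Matrix (Y × C) (Y × C) ℂ := Matrix.of fun p p' =>
      if p.1 = p'.1 then
        trFstSnd ((N p.1 ⊗ₖ (1 : Matrix (B × C) (B × C) ℂ)) * ρ) p.2 p'.2 else 0;
    -(renyiDiv α ρXB ((1 : Matrix X X ℂ) ⊗ₖ trFst ρXB)) +
      -(renyiDiv β ρYC ((1 : Matrix Y Y ℂ) ⊗ₖ trFst ρYC)) ≥ Real.log (1 / c) := by
  intro ρXB ρYC
  have eX : ρXB = blk (fun x => FB ρ (M x)) := rfl
  have eY : ρYC = blk (fun y => FC ρ (N y)) := rfl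
  have tX : trFst ρXB = FB ρ 1 := by rw [eX, trFst_blk, FB_sum, hMsum]
  have tY : trFst ρYC = FC ρ 1 := by rw [eY, trFst_blk, FC_sum, hNsum]
  rw [tX, tY, eX, eY, renyi_blk _ _ (fun x => FB_psd hρ (hM x)) (FB_psd hρ PosSemidef.one),
    renyi_blk _ _ (fun y => FC_psd hρ (hN y)) (FC_psd hρ PosSemidef.one)]
  have hle : ∀ x y, ‖Matrix.toEuclideanCLM (𝕜 := ℂ)
      (matRpow (M x) (1 / 2) * matRpow (N y) (1 / 2))‖ ≤ c := by
    intro x y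
    rw [hc]
    refine le_trans ?_ (le_ciSup (f := fun x : X => ⨆ y : Y, ‖Matrix.toEuclideanCLM (𝕜 := ℂ)
      (matRpow (M x) (1 / 2) * matRpow (N y) (1 / 2))‖) (Set.finite_range _).bddAbove x)
    exact le_ciSup (f := fun y : Y => ‖Matrix.toEuclideanCLM (𝕜 := ℂ)
      (matRpow (M x) (1 / 2) * matRpow (N y) (1 / 2))‖) (Set.finite_range _).bddAbove y
  have hc1 : c ≤ 1 := by
    rw [hc]
    exact ciSup_le fun x => ciSup_le fun y => norm_le_one_povm _ _ (hM x) (hN y)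
      (sum_erase_psd M hM hMsum x) (sum_erase_psd N hN hNsum y)
  have hc0 : 0 < c := by
    by_contra hn
    push Not at hn
    have hz : ∀ x y, M x * N y = 0 := by
      intro x y
      have h0 : matRpow (M x) (1 / 2) * matRpow (N y) (1 / 2) = 0 := by
        have := norm_le_zero_iff.1 ((hle x y).trans hn)
        exact (map_eq_zero_iff _ (Matrix.toEuclideanCLM (𝕜 := ℂ) (n := A)).injective).1 this
      calc M x * N y = (matRpow (M x) (1/2) * matRpow (M x) (1/2)) *
            (matRpow (N y) (1/2) * matRpow (N y) (1/2)) := by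
              rw [(matRpow_half_mul (hM x)).1, (matRpow_half_mul (hN y)).1]
        _ = matRpow (M x) (1/2) * (matRpow (M x) (1/2) * matRpow (N y) (1/2)) *
              matRpow (N y) (1/2) := by simp only [Matrix.mul_assoc]
        _ = 0 := by rw [h0]; simp
    have h1 : (1 : Matrix A A ℂ) = 0 := by
      calc (1 : Matrix A A ℂ) = (∑ x, M x) * ∑ y, N y := by rw [hMsum, hNsum, Matrix.one_mul]
        _ = 0 := by
          rw [Finset.sum_mul]
          refine Finset.sum_eq_zero fun x _ => ?_
          rw [Finset.mul_sum]
          exact Finset.sum_eq_zero fun y _ => hz x y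
    have h2 : ρ = 0 := by
      calc ρ = ((1 : Matrix A A ℂ) ⊗ₖ (1 : Matrix (B × C) (B × C) ℂ)) * ρ := by
            rw [one_kronecker_one, Matrix.one_mul]
        _ = 0 := by rw [h1, zero_kronecker, Matrix.zero_mul]
    rw [h2, trace_zero] at hρ1
    exact zero_ne_one hρ1
  obtain ⟨ha0, ha2⟩ := hα
  obtain ⟨hb0, hb2⟩ := hβ
  rcases lt_or_gt_of_ne hα1 with hlt | hgt
  · obtain ⟨s, rfl⟩ : ∃ s, α = 1 - s := ⟨1 - α, by ring⟩
    obtain rfl : β = 1 + s := by linarith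
    have hc' := core ρ hρ M N hM hMsum hN hNsum c hc0
      (fun x y => psd_povm _ _ (hM x) (hN y) c hc0.le hc1 (hle x y)) s
      ⟨by linarith, by linarith⟩
    have hp := core_pos ρ hρ hρ1 N hN hNsum (1 + s) (-s)
    have := final_log _ _ c s (by linarith) hc0 hp hc'
    rw [show 1 - (1 - s) = s by ring, show 1 - (1 + s) = -s by ring,
      show 1 - s - 1 = -s by ring, show 1 + s - 1 = s by ring, inv_neg]
    linarith
  · obtain ⟨s, rfl⟩ : ∃ s, β = 1 - s := ⟨1 - β, by ring⟩
    obtain rfl : α = 1 + s := by linarith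
    have hc' := core (swp ρ) (swp_psd hρ) N M hN hNsum hM hMsum c hc0
      (fun y x => psd_povm _ _ (hN y) (hM x) c hc0.le hc1
        ((norm_swap _ _ (hM x) (hN y)).le.trans (hle x y))) s
      ⟨by linarith, by linarith⟩
    have hp := core_pos (swp ρ) (swp_psd hρ) ((trace_swp ρ).trans hρ1) M hM hMsum (1 + s) (-s)
    have := final_log _ _ c s (by linarith) hc0 hp hc'
    simp only [FC_swp, FB_swp] at this
    rw [show 1 - (1 - s) = s by ring, show 1 - (1 + s) = -s by ring,
      show 1 - s - 1 = -s by ring, show 1 + s - 1 = s by ring, inv_neg]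
    linarith
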